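/- Let n ≥ 3, let M = {(x₁,…,xₙ) ∈ ℝⁿ : xₙ > 0} with the conformally flat metric g = xₙ^{4/(n−2)} (dx₁² + ⋯ + dxₙ²). Then the functions f(x) = ((n−2)/(n+2)) xₙ^{(n+2)/(n−2)} + (2n/(n+2)) log(xₙ) and λ(x) = 2/((n−2) xₙ) + (2/(n+2)) xₙ^{−2n/(n−2)} satisfy H_f + ρ = λ g, i.e., (M,g,f,λ) is a proper gradient Ricci almost soliton; moreover the Ricci tensor of (M,g) is Codazzi but not parallel, and (M,g) is not Einstein. -/

import Mathlib

/-!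
Everything depends only on `t = x_e`, the last coordinate.  Put `a = 2 / (n - 2)`, so that
`g = t ^ (2 a) δ`, and `E i = δ i e`.  The Christoffel symbols are
`Γ^k_{ij} = (a / t) (δ_{ki} E_j + δ_{kj} E_i - δ_{ij} E_k)` (`christoffel_eq`), and since
`a (n - 2) = 2` the Ricci tensor is `t⁻² ((2 + 2 a) E_i E_j - a δ_{ij})` (`ricciT_eq`).

From these two formulas the covariant derivative of the Ricci tensor is
`t⁻³ (-(2 + 2 a) (2 + 4 a) E_i E_j E_k + (2 a + 2 a²) (E_i δ_{jk} + E_j δ_{ik} + E_k δ_{ij}))`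
(`covRicT_eq`), which is totally symmetric, so the Ricci tensor is Codazzi, and whose `(e, e, e)`
component is `-(2 + 2 a) (2 + a) t⁻³ ≠ 0`, so it is not parallel.  The metric is not Einstein because
the Ricci tensor is positive in the direction `e` and negative in the others.  The soliton equation
follows from `f' = t ^ (2 a) + (2 n / (n + 2)) / t`.
-/

open scoped BigOperators

noncomputable section

/-- Partial derivative of a real-valued function on `ℝⁿ` in the `i`-th coordinate
direction. -/
def pd (n : ℕ) (i : Fin n) (h : (Fin n → ℝ) → ℝ) (x : Fin n → ℝ) : ℝ :=
  fderiv ℝ h x (Pi.single i 1)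

/-- The conformally flat metric `g = x_e^{4/(n-2)} (dx₁² + ⋯ + dxₙ²)` (components),
where `e` is the distinguished ("last") coordinate. -/
def gm (n : ℕ) (e : Fin n) (x : Fin n → ℝ) (i j : Fin n) : ℝ :=
  (x e) ^ ((4 : ℝ) / ((n : ℝ) - 2)) * (if i = j then 1 else 0)

/-- The inverse metric (components). -/
def ginv (n : ℕ) (e : Fin n) (x : Fin n → ℝ) (i j : Fin n) : ℝ :=
  (x e) ^ (-(4 : ℝ) / ((n : ℝ) - 2)) * (if i = j then 1 else 0)

/-- Christoffel symbols `Γ^k_{ij}` of the Levi-Civita connection of `gm`. -/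
def christoffel (n : ℕ) (e : Fin n) (x : Fin n → ℝ) (k i j : Fin n) : ℝ :=
  (1 / 2) * ∑ l, ginv n e x k l *
    (pd n i (fun y => gm n e y j l) x + pd n j (fun y => gm n e y i l) x
      - pd n l (fun y => gm n e y i j) x)

/-- The Ricci tensor `R_{ij} = ∂_k Γ^k_{ij} - ∂_i Γ^k_{kj} + Γ^k_{kl} Γ^l_{ij}
- Γ^k_{il} Γ^l_{kj}` of the metric `gm` (components). -/
def ricciT (n : ℕ) (e : Fin n) (x : Fin n → ℝ) (i j : Fin n) : ℝ :=
  (∑ k, pd n k (fun y => christoffel n e y k i j) x)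
    - (∑ k, pd n i (fun y => christoffel n e y k k j) x)
    + (∑ k, ∑ l, christoffel n e x k k l * christoffel n e x l i j)
    - (∑ k, ∑ l, christoffel n e x k i l * christoffel n e x l k j)

/-- The Hessian tensor `(H_f)_{ij} = ∂_i ∂_j f - Γ^k_{ij} ∂_k f` with respect to the
metric `gm` (components). -/
def hessT (n : ℕ) (e : Fin n) (f : (Fin n → ℝ) → ℝ) (x : Fin n → ℝ) (i j : Fin n) : ℝ :=
  pd n i (fun y => pd n j f y) x - ∑ k, christoffel n e x k i j * pd n k f x

/-- The covariant derivative of the Ricci tensor,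
`(∇_i ρ)_{jk} = ∂_i R_{jk} - Γ^l_{ij} R_{lk} - Γ^l_{ik} R_{jl}` (components). -/
def covRicT (n : ℕ) (e : Fin n) (x : Fin n → ℝ) (i j k : Fin n) : ℝ :=
  pd n i (fun y => ricciT n e y j k) x
    - (∑ l, christoffel n e x l i j * ricciT n e x l k)
    - (∑ l, christoffel n e x l i k * ricciT n e x j l)

/-- The potential function
`f(x) = ((n-2)/(n+2)) x_e^{(n+2)/(n-2)} + (2n/(n+2)) log x_e`. -/
def fRAS (n : ℕ) (e : Fin n) (x : Fin n → ℝ) : ℝ :=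
  (((n : ℝ) - 2) / ((n : ℝ) + 2)) * (x e) ^ (((n : ℝ) + 2) / ((n : ℝ) - 2))
    + (2 * (n : ℝ) / ((n : ℝ) + 2)) * Real.log (x e)

/-- The soliton function `λ(x) = 2/((n-2) x_e) + (2/(n+2)) x_e^{-2n/(n-2)}`. -/
def lamRAS (n : ℕ) (e : Fin n) (x : Fin n → ℝ) : ℝ :=
  2 / (((n : ℝ) - 2) * x e)
    + (2 / ((n : ℝ) + 2)) * (x e) ^ (-(2 * (n : ℝ)) / ((n : ℝ) - 2))

/-! ### Kronecker deltas and derivatives in `x_e` -/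

/-- The Kronecker delta with real values. -/
def kd {n : ℕ} (i j : Fin n) : ℝ := if i = j then 1 else 0

/-- Contraction with the Kronecker delta. -/
lemma sum_kd_mul {n : ℕ} (k : Fin n) (F : Fin n → ℝ) : ∑ l, kd k l * F l = F k := by
  simp [kd]

lemma kd_comm {n : ℕ} (i j : Fin n) : kd i j = kd j i := by
  simp only [kd, eq_comm]

lemma kd_self {n : ℕ} (i : Fin n) : kd i i = 1 := by simp [kd]

lemma sum_kd_mul' {n : ℕ} (k : Fin n) (F : Fin n → ℝ) : ∑ l, kd l k * F l = F k := by
  simp [kd]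


/-- The chain rule for a function that depends only on the coordinate `x_e` on the half-space
`x_e > 0`. -/
lemma pd_eq {n : ℕ} {e : Fin n} {F : (Fin n → ℝ) → ℝ} {h : ℝ → ℝ} {h' : ℝ} {x : Fin n → ℝ}
    (hx : 0 < x e) (hF : ∀ y : Fin n → ℝ, 0 < y e → F y = h (y e))
    (hh : HasDerivAt h h' (x e)) (i : Fin n) : pd n i F x = h' * kd i e := by
  have h1 : HasFDerivAt (fun y : Fin n → ℝ => y e)
      (ContinuousLinearMap.proj e : (Fin n → ℝ) →L[ℝ] ℝ) x :=
    (ContinuousLinearMap.proj e : (Fin n → ℝ) →L[ℝ] ℝ).hasFDerivAt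
  have h2 := hh.comp_hasFDerivAt x h1
  have h3 : F =ᶠ[nhds x] (h ∘ fun y : Fin n → ℝ => y e) := by
    have : ∀ᶠ y : Fin n → ℝ in nhds x, 0 < y e :=
      (continuous_apply e).continuousAt.eventually (lt_mem_nhds hx)
    filter_upwards [this] with y hy using hF y hy
  unfold pd
  rw [(h2.congr_of_eventuallyEq h3).fderiv]
  simp [kd, Pi.single_apply, eq_comm]

/-! ### Connection and curvature -/

/-- The coefficient of `a / x_e` in the Christoffel symbol `Γ^k_{ij}`. -/
def cc {n : ℕ} (e k i j : Fin n) : ℝ := kd k i * kd j e + kd k j * kd i e - kd i j * kd k e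

/-- The constant `a = 2 / (n - 2)`, half the conformal exponent: the metric is `x_e ^ (2 a) δ`. -/
def ca (n : ℕ) : ℝ := 2 / ((n : ℝ) - 2)

lemma ca_mul {n : ℕ} (hn : 3 ≤ n) : ca n * ((n : ℝ) - 2) = 2 := by
  have : (3 : ℝ) ≤ n := by exact_mod_cast hn
  exact div_mul_cancel₀ _ (by linarith)

lemma ca_pos {n : ℕ} (hn : 3 ≤ n) : 0 < ca n := by
  have : (3 : ℝ) ≤ n := by exact_mod_cast hn
  exact div_pos two_pos (by linarith)

lemma gm_eq (n : ℕ) (e : Fin n) (x : Fin n → ℝ) (i j : Fin n) :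
    gm n e x i j = (x e) ^ (2 * ca n) * kd i j := by
  unfold gm ca kd; congr 2; ring

lemma ginv_eq (n : ℕ) (e : Fin n) (x : Fin n → ℝ) (i j : Fin n) :
    ginv n e x i j = (x e) ^ (-(2 * ca n)) * kd i j := by
  unfold ginv ca kd; congr 2; ring

lemma pd_gm {n : ℕ} {e : Fin n} {x : Fin n → ℝ} (hx : 0 < x e) (i j k : Fin n) :
    pd n i (fun y => gm n e y j k) x
      = 2 * ca n * (x e) ^ (2 * ca n - 1) * kd j k * kd i e := by
  refine pd_eq hx (h := fun t => t ^ (2 * ca n) * kd j k) (fun y _ => gm_eq n e y j k) ?_ i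
  exact (Real.hasDerivAt_rpow_const (Or.inl hx.ne')).mul_const _

lemma christoffel_eq {n : ℕ} {e : Fin n} {x : Fin n → ℝ} (hx : 0 < x e) (k i j : Fin n) :
    christoffel n e x k i j = ca n * (x e)⁻¹ * cc e k i j := by
  unfold christoffel
  have hp : (x e) ^ (-(2 * ca n)) * (x e) ^ (2 * ca n - 1) = (x e)⁻¹ := by
    rw [← Real.rpow_add hx, ← Real.rpow_neg_one]; congr 1; ring
  simp only [ginv_eq, pd_gm hx]
  have : ∀ l, (x e) ^ (-(2 * ca n)) * kd k l *
      (2 * ca n * (x e) ^ (2 * ca n - 1) * kd j l * kd i e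
        + 2 * ca n * (x e) ^ (2 * ca n - 1) * kd i l * kd j e
        - 2 * ca n * (x e) ^ (2 * ca n - 1) * kd i j * kd l e)
      = kd k l * (2 * ca n * (x e)⁻¹ * (kd j l * kd i e + kd i l * kd j e - kd i j * kd l e)) := by
    intro l; rw [← hp]; ring
  simp only [this, sum_kd_mul, cc]
  rw [kd_comm j k, kd_comm i k]; ring

/-- Contraction of a vector with the upper index of the Christoffel coefficient. -/
lemma sum_cc_mul {n : ℕ} (e i j : Fin n) (X : Fin n → ℝ) :
    ∑ k, cc e k i j * X k = kd j e * X i + kd i e * X j - kd i j * X e := by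
  have : ∀ k, cc e k i j * X k
      = kd k i * (kd j e * X k) + kd k j * (kd i e * X k) - kd k e * (kd i j * X k) := by
    intro k; unfold cc; ring
  simp only [this, Finset.sum_sub_distrib, Finset.sum_add_distrib, sum_kd_mul']

/-- The trace `∑ k, Γ^k_{kj}`, up to the factor `a / x_e`. -/
lemma sum_cc_trace {n : ℕ} (e j : Fin n) : ∑ k, cc e k k j = n * kd j e := by
  have : ∀ k, cc e k k j = kd j e + kd k j * kd k e - kd k j * kd k e := by
    intro k; unfold cc; rw [kd_self]; ring
  simp [this]

lemma cc_symm {n : ℕ} (e k i j : Fin n) : cc e k i j = cc e k j i := by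
  unfold cc; rw [kd_comm i j]; ring

/-- The full contraction `∑ Γ^k_{il} Γ^l_{kj}`, up to the factor `(a / x_e) ^ 2`. -/
lemma sum_cc_cc {n : ℕ} (e i j : Fin n) :
    ∑ k, ∑ l, cc e k i l * cc e l k j = (n + 2) * kd i e * kd j e - 2 * kd i j := by
  have h1 : ∀ k, ∑ l, cc e k i l * cc e l k j
      = kd j e * cc e k k i + cc e k i j * kd k e - kd k j * cc e k i e := by
    intro k
    have : ∀ l, cc e k i l * cc e l k j = cc e l k j * cc e k i l := fun l => mul_comm _ _
    simp only [this, sum_cc_mul]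
    rw [cc_symm e k i k]; ring
  simp only [h1, Finset.sum_sub_distrib, Finset.sum_add_distrib, ← Finset.mul_sum,
    sum_cc_trace, sum_cc_mul, sum_kd_mul']
  simp only [cc, kd_self, kd_comm j i]; ring

lemma pd_christoffel {n : ℕ} {e : Fin n} {x : Fin n → ℝ} (hx : 0 < x e) (m k i j : Fin n) :
    pd n m (fun y => christoffel n e y k i j) x
      = -(ca n * cc e k i j * ((x e) ^ 2)⁻¹) * kd m e := by
  refine pd_eq hx (h := fun t => ca n * t⁻¹ * cc e k i j)
    (fun y hy => christoffel_eq hy k i j) ?_ m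
  exact (((hasDerivAt_inv hx.ne').const_mul (ca n)).mul_const (cc e k i j)).congr_deriv (by ring)

lemma ricciT_eq {n : ℕ} (hn : 3 ≤ n) {e : Fin n} {x : Fin n → ℝ} (hx : 0 < x e) (i j : Fin n) :
    ricciT n e x i j
      = ((x e) ^ 2)⁻¹ * ((2 + 2 * ca n) * kd i e * kd j e - ca n * kd i j) := by
  have ha := ca_mul hn
  unfold ricciT
  have h1 : ∑ k, pd n k (fun y => christoffel n e y k i j) x
      = -(ca n * ((x e) ^ 2)⁻¹) * (2 * kd i e * kd j e - kd i j) := by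
    have : ∀ k, pd n k (fun y => christoffel n e y k i j) x
        = -(ca n * ((x e) ^ 2)⁻¹) * (cc e k i j * kd k e) := by
      intro k; rw [pd_christoffel hx]; ring
    simp only [this, ← Finset.mul_sum, sum_cc_mul, kd_self]; ring
  have h2 : ∑ k, pd n i (fun y => christoffel n e y k k j) x
      = -(ca n * ((x e) ^ 2)⁻¹) * (n * kd i e * kd j e) := by
    have : ∀ k, pd n i (fun y => christoffel n e y k k j) x
        = -(ca n * ((x e) ^ 2)⁻¹) * kd i e * cc e k k j := by
      intro k; rw [pd_christoffel hx]; ring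
    simp only [this, ← Finset.mul_sum, sum_cc_trace]; ring
  have h3 : ∑ k, ∑ l, christoffel n e x k k l * christoffel n e x l i j
      = (ca n) ^ 2 * ((x e) ^ 2)⁻¹ * (n * (2 * kd i e * kd j e - kd i j)) := by
    rw [Finset.sum_comm]
    have : ∀ l k, christoffel n e x k k l * christoffel n e x l i j
        = (ca n) ^ 2 * ((x e) ^ 2)⁻¹ * (cc e l i j * cc e k k l) := by
      intro l k; rw [christoffel_eq hx, christoffel_eq hx]; ring
    simp only [this, ← Finset.mul_sum, sum_cc_trace, sum_cc_mul, kd_self]; ring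
  have h4 : ∑ k, ∑ l, christoffel n e x k i l * christoffel n e x l k j
      = (ca n) ^ 2 * ((x e) ^ 2)⁻¹ * ((n + 2) * kd i e * kd j e - 2 * kd i j) := by
    have : ∀ k l, christoffel n e x k i l * christoffel n e x l k j
        = (ca n) ^ 2 * ((x e) ^ 2)⁻¹ * (cc e k i l * cc e l k j) := by
      intro k l; rw [christoffel_eq hx, christoffel_eq hx]; ring
    simp only [this, ← Finset.mul_sum, sum_cc_cc]
  rw [h1, h2, h3, h4]
  linear_combination ((x e) ^ 2)⁻¹ *
    ((1 + ca n) * kd i e * kd j e - ca n * kd i j) * ha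

lemma covRicT_eq {n : ℕ} (hn : 3 ≤ n) {e : Fin n} {x : Fin n → ℝ} (hx : 0 < x e)
    (i j k : Fin n) :
    covRicT n e x i j k = ((x e) ^ 3)⁻¹ *
      (-(2 + 2 * ca n) * (2 + 4 * ca n) * (kd i e * kd j e * kd k e)
        + (2 * ca n + 2 * ca n ^ 2) *
          (kd i e * kd j k + kd j e * kd i k + kd k e * kd i j)) := by
  have h1 : pd n i (fun y => ricciT n e y j k) x
      = -2 * ((x e) ^ 3)⁻¹ * ((2 + 2 * ca n) * kd j e * kd k e - ca n * kd j k) * kd i e := by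
    refine pd_eq hx
      (h := fun t => (t ^ 2)⁻¹ * ((2 + 2 * ca n) * kd j e * kd k e - ca n * kd j k))
      (fun y hy => ricciT_eq hn hy j k) ?_ i
    have hd : HasDerivAt (fun t : ℝ => (t ^ 2)⁻¹) (-2 * ((x e) ^ 3)⁻¹) (x e) := by
      refine ((hasDerivAt_pow 2 (x e)).fun_inv (pow_ne_zero 2 hx.ne')).congr_deriv ?_
      have := hx.ne'
      field_simp
      norm_num
      ring
    exact hd.mul_const _
  have h2 : ∀ i j k : Fin n, ∑ l, christoffel n e x l i j * ricciT n e x l k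
      = ca n * (x e)⁻¹ * (kd j e * ricciT n e x i k + kd i e * ricciT n e x j k
        - kd i j * ricciT n e x e k) := by
    intro i j k
    have : ∀ l, christoffel n e x l i j * ricciT n e x l k
        = ca n * (x e)⁻¹ * (cc e l i j * ricciT n e x l k) := by
      intro l; rw [christoffel_eq hx]; ring
    simp only [this, ← Finset.mul_sum, sum_cc_mul]
  have hs : ∀ l, ricciT n e x j l = ricciT n e x l j := by
    intro l; rw [ricciT_eq hn hx, ricciT_eq hn hx, kd_comm l j]; ring
  unfold covRicT
  simp only [hs]
  rw [h2, h2, h1]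
  simp only [ricciT_eq hn hx, kd_self, kd_comm k j, kd_comm e k, kd_comm e j]
  have h3 : ((x e) ^ 3)⁻¹ = (x e)⁻¹ * ((x e) ^ 2)⁻¹ := by rw [← mul_inv]; ring
  rw [h3]; ring

/-! ### The potential function -/

lemma pd_fRAS {n : ℕ} (hn : 3 ≤ n) {e : Fin n} {x : Fin n → ℝ} (hx : 0 < x e) (i : Fin n) :
    pd n i (fRAS n e) x
      = ((x e) ^ (2 * ca n) + 2 * n / (n + 2) * (x e)⁻¹) * kd i e := by
  have hn' : (3 : ℝ) ≤ n := by exact_mod_cast hn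
  have hm : (n : ℝ) - 2 ≠ 0 := by linarith
  have hp : (n : ℝ) + 2 ≠ 0 := by linarith
  refine pd_eq hx (h := fun t => (((n : ℝ) - 2) / ((n : ℝ) + 2)) *
    t ^ (((n : ℝ) + 2) / ((n : ℝ) - 2)) + (2 * (n : ℝ) / ((n : ℝ) + 2)) * Real.log t)
    (fun y _ => rfl) ?_ i
  refine (((Real.hasDerivAt_rpow_const (p := ((n : ℝ) + 2) / ((n : ℝ) - 2))
    (Or.inl hx.ne')).const_mul (((n : ℝ) - 2) / ((n : ℝ) + 2))).add
    ((Real.hasDerivAt_log hx.ne').const_mul (2 * (n : ℝ) / ((n : ℝ) + 2)))).congr_deriv ?_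
  have he : ((n : ℝ) + 2) / ((n : ℝ) - 2) - 1 = 2 * ca n := by
    unfold ca; field_simp; ring
  rw [he]; field_simp

lemma hessT_eq {n : ℕ} (hn : 3 ≤ n) {e : Fin n} {x : Fin n → ℝ} (hx : 0 < x e) (i j : Fin n) :
    hessT n e (fRAS n e) x i j
      = (2 * ca n * (x e) ^ (2 * ca n - 1) - 2 * n / (n + 2) * ((x e) ^ 2)⁻¹) * kd i e * kd j e
        - ca n * (x e)⁻¹ * ((x e) ^ (2 * ca n) + 2 * n / (n + 2) * (x e)⁻¹)
          * (2 * kd i e * kd j e - kd i j) := by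
  have h1 : pd n i (fun y => pd n j (fRAS n e) y) x
      = (2 * ca n * (x e) ^ (2 * ca n - 1) + 2 * n / (n + 2) * -((x e) ^ 2)⁻¹) * kd j e
        * kd i e := by
    refine pd_eq hx (h := fun t => (t ^ (2 * ca n) + 2 * n / (n + 2) * t⁻¹) * kd j e)
      (fun y hy => pd_fRAS hn hy j) ?_ i
    exact ((Real.hasDerivAt_rpow_const (Or.inl hx.ne')).add
      ((hasDerivAt_inv hx.ne').const_mul _)).mul_const _
  have h2 : ∀ k, christoffel n e x k i j * pd n k (fRAS n e) x
      = ca n * (x e)⁻¹ * ((x e) ^ (2 * ca n) + 2 * n / (n + 2) * (x e)⁻¹)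
        * (cc e k i j * kd k e) := by
    intro k; rw [christoffel_eq hx, pd_fRAS hn hx]; ring
  have h3 : hessT n e (fRAS n e) x i j = pd n i (fun y => pd n j (fRAS n e) y) x
      - ∑ k, christoffel n e x k i j * pd n k (fRAS n e) x := rfl
  rw [h3, h1]
  simp only [h2, ← Finset.mul_sum, sum_cc_mul, kd_self]
  ring

/-- For `n ≥ 3`, on the upper half-space
`M = {x ∈ ℝⁿ : xₙ > 0}` with the conformally flat metric
`g = xₙ^{4/(n-2)} (dx₁² + ⋯ + dxₙ²)`, the functions `f` and `λ` above satisfy the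
gradient Ricci almost soliton equation `H_f + ρ = λ g`; the soliton is proper
(`λ` is non-constant), the Ricci tensor is Codazzi but not parallel, and `(M,g)`
is not Einstein. -/
theorem upper_halfspace_conformal_gradRAS (n : ℕ) (hn : 3 ≤ n)
    (e : Fin n) (he : (e : ℕ) = n - 1) :
    (∀ x : Fin n → ℝ, 0 < x e → ∀ i j : Fin n,
      hessT n e (fRAS n e) x i j + ricciT n e x i j = lamRAS n e x * gm n e x i j) ∧
    (∃ x y : Fin n → ℝ, 0 < x e ∧ 0 < y e ∧ lamRAS n e x ≠ lamRAS n e y) ∧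
    (∀ x : Fin n → ℝ, 0 < x e → ∀ i j k : Fin n,
      covRicT n e x i j k = covRicT n e x j i k) ∧
    (∃ (x : Fin n → ℝ) (i j k : Fin n), 0 < x e ∧ covRicT n e x i j k ≠ 0) ∧
    (¬ ∃ c : ℝ, ∀ x : Fin n → ℝ, 0 < x e → ∀ i j : Fin n,
      ricciT n e x i j = c * gm n e x i j) := by
  have hn' : (3 : ℝ) ≤ n := by exact_mod_cast hn
  have hm : (0 : ℝ) < (n : ℝ) - 2 := by linarith
  have hp : (0 : ℝ) < (n : ℝ) + 2 := by linarith
  have ha := ca_pos hn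
  refine ⟨?_, ?_, ?_, ?_, ?_⟩
  · intro x hx i j
    have hlam : lamRAS n e x * (x e) ^ (2 * ca n)
        = ca n * (x e)⁻¹ * (x e) ^ (2 * ca n) + 2 / (n + 2) * ((x e) ^ 2)⁻¹ := by
      have hq : (x e) ^ (-(2 * (n : ℝ)) / ((n : ℝ) - 2)) * (x e) ^ (2 * ca n)
          = ((x e) ^ 2)⁻¹ := by
        rw [← Real.rpow_add hx, ← Real.rpow_natCast, ← Real.rpow_neg hx.le]
        congr 1
        unfold ca; push_cast; field_simp; ring
      unfold lamRAS
      rw [add_mul, mul_assoc (2 / ((n : ℝ) + 2)), hq]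
      congr 1
      unfold ca; field_simp
    have h1 : (x e) ^ (2 * ca n - 1) = (x e)⁻¹ * (x e) ^ (2 * ca n) := by
      rw [Real.rpow_sub_one hx.ne']; ring
    rw [hessT_eq hn hx, ricciT_eq hn hx, gm_eq, ← mul_assoc, hlam, h1, ← inv_pow]
    -- the two scalar identities behind the `E_i E_j` and the `δ_{ij}` components
    have k1 : 2 * (n : ℝ) / (n + 2) * (1 + 2 * ca n) = 2 + 2 * ca n := by
      unfold ca; field_simp; ring
    have k2 : ca n * (2 * (n : ℝ) / (n + 2)) - ca n = 2 / (n + 2) := by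
      unfold ca; field_simp; ring
    linear_combination -(((x e)⁻¹) ^ 2 * kd i e * kd j e) * k1 + ((x e)⁻¹) ^ 2 * kd i j * k2
  · refine ⟨fun _ => 1, fun _ => 2, one_pos, two_pos, ne_of_gt ?_⟩
    unfold lamRAS
    have h1 : (2 : ℝ) / (((n : ℝ) - 2) * 2) < 2 / (((n : ℝ) - 2) * 1) := by
      gcongr; norm_num
    have h2 : (2 : ℝ) ^ (-(2 * (n : ℝ)) / ((n : ℝ) - 2)) ≤ 1 :=
      Real.rpow_le_one_of_one_le_of_nonpos one_le_two
        (div_nonpos_of_nonpos_of_nonneg (by linarith) hm.le)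
    rw [Real.one_rpow]
    have h3 : 2 / ((n : ℝ) + 2) * (2 : ℝ) ^ (-(2 * (n : ℝ)) / ((n : ℝ) - 2))
        ≤ 2 / ((n : ℝ) + 2) * 1 := by gcongr
    linarith
  · intro x hx i j k
    rw [covRicT_eq hn hx, covRicT_eq hn hx, kd_comm j i]; ring
  · refine ⟨fun _ => 1, e, e, e, one_pos, ?_⟩
    rw [covRicT_eq hn one_pos]
    simp only [kd_self]
    norm_num
    nlinarith
  · rintro ⟨c, hc⟩
    -- compare the `(e, e)` and the `(0, 0)` components at a point with `x_e = 1`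
    let o : Fin n := ⟨0, by omega⟩
    have hoe : kd o e = 0 := by
      have : o ≠ e := fun h => by
        have := congrArg Fin.val h
        simp only [o] at this
        omega
      simp [kd, this]
    have h1 := hc (fun _ => 1) one_pos e e
    have h2 := hc (fun _ => 1) one_pos o o
    rw [ricciT_eq hn one_pos, gm_eq] at h1 h2
    simp only [kd_self, hoe, Real.one_rpow] at h1 h2
    linarith

end
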